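/- arXiv:2603.16327 — 2 statements merged into one kernel-verified Lean document; each statement's English description precedes it below -/
import Mathlib

section
/- Let n ≥ 1 and m ≥ 1, and let G₁ ≤ G₂ ≤ ⋯ ≤ Gₘ be a nested family of simple graphs on the vertex set Fin n (i.e., every edge of G_t is an edge of G_{t+1} for each t). Then there exist points p : Fin n → EuclideanSpace ℝ (Fin n) and real numbers 0 < r₁ < r₂ < ⋯ < rₘ such that p is injective and, for every t ∈ {1,…,m} and all vertices i ≠ j, dist (p i) (p j) ≤ r_t if and only if i and j are adjacent in G_t. (Realization of a filtered graph as nested distance-threshold graphs, Proposition 5.2.) -/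
/-!
Fix a symmetric real matrix `A` of size `n` that is positive semidefinite with constant diagonal
`C`. Writing `A = Bᵀ B` and letting `p i` be the `i`-th column of `B`, the Gram matrix of the points
`p i` is `A`, so `dist (p i) (p j) ^ 2 = 2 * C - 2 * A i j`
(`exists_dist_sq_of_small_off_diag`). If the entries off the diagonal are bounded by `M` and
`n * M ≤ C`, then `A` is automatically positive semidefinite, so these entries can be prescribed
freely.

For the filtration, the entry at `i ≠ j` is the number `level G i j` of indices `t` for which
`i` and `j` are adjacent in `G t`. Since the family is nested, adjacency at index `t` (numbered from
`0`) is equivalent to `m - t ≤ level G i j`, hence to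
`dist (p i) (p j) ^ 2 ≤ 2 * C - 2 * (m - t)`, and the right-hand side is positive and strictly
increasing in `t` once `m < C`.
-/

open scoped MatrixOrder Matrix.Norms.L2Operator in
/-- Symmetric weights `w` with `|w i j| ≤ M` arise, up to an affine change, as the squared distances
of `n` points in `n`-dimensional Euclidean space: the matrix with diagonal `C ≥ n * M` and entries
`w i j` off the diagonal is the Gram matrix of the points. -/
lemma exists_dist_sq_of_small_off_diag {n : ℕ} (w : Fin n → Fin n → ℝ) (M C : ℝ)
    (hsymm : ∀ i j, w i j = w j i) (hdiag : ∀ i, w i i = 0) (hw : ∀ i j, |w i j| ≤ M)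
    (hC : n * M ≤ C) :
    ∃ p : Fin n → EuclideanSpace ℝ (Fin n),
      ∀ i j, i ≠ j → dist (p i) (p j) ^ 2 = 2 * C - 2 * w i j := by
  have hpsd : (Matrix.of fun i j => (if i = j then C else 0) + w i j).PosSemidef := by
    refine Matrix.PosSemidef.of_dotProduct_mulVec_nonneg ?_ fun x => ?_
    · ext i j
      simp [hsymm i j, eq_comm]
    · -- Each off-diagonal term is at least `-M * (x i ^ 2 + x j ^ 2) / 2`.
      have hterm : ∀ i j, -(M / 2 * (x i ^ 2 + x j ^ 2)) ≤ x i * (w i j * x j) := fun i j => by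
        obtain ⟨h1, h2⟩ := abs_le.mp (hw i j)
        nlinarith [mul_nonneg (sub_nonneg.mpr h2) (sq_nonneg (x i - x j)),
          mul_nonneg (neg_le_iff_add_nonneg.mp h1) (sq_nonneg (x i + x j))]
      have hsum : ∑ i, ∑ j, -(M / 2 * (x i ^ 2 + x j ^ 2)) ≤ ∑ i, ∑ j, x i * (w i j * x j) :=
        Finset.sum_le_sum fun i _ => Finset.sum_le_sum fun j _ => hterm i j
      have hleft : ∑ i, ∑ j, -(M / 2 * (x i ^ 2 + x j ^ 2)) = -(n * M * ∑ i, x i ^ 2) := by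
        simp only [Finset.sum_neg_distrib, ← Finset.mul_sum, Finset.sum_add_distrib,
          Finset.sum_const, Finset.card_univ, Fintype.card_fin, nsmul_eq_mul]
        ring
      have hquad : star x ⬝ᵥ (Matrix.of fun i j => (if i = j then C else 0) + w i j).mulVec x
          = C * ∑ i, x i ^ 2 + ∑ i, ∑ j, x i * (w i j * x j) := by
        simp only [dotProduct, Matrix.mulVec, Matrix.of_apply, add_mul, Finset.sum_add_distrib,
          ite_mul, zero_mul, Finset.sum_ite_eq, Finset.mem_univ, if_true, mul_add, Finset.mul_sum,
          Pi.star_apply, star_trivial]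
        congr 1
        exact Finset.sum_congr rfl fun i _ => by ring
      rw [hquad]
      have := mul_le_mul_of_nonneg_right hC (Finset.sum_nonneg fun i _ => sq_nonneg (x i) :
        (0 : ℝ) ≤ ∑ i, x i ^ 2)
      linarith
  obtain ⟨B, hB⟩ := CStarAlgebra.nonneg_iff_eq_star_mul_self.mp hpsd.nonneg
  have hgram : ∀ i j, ∑ k, B k i * B k j = (if i = j then C else 0) + w i j := fun i j => by
    have := congrFun (congrFun hB i) j
    simpa [Matrix.star_eq_conjTranspose, Matrix.mul_apply] using this.symm
  refine ⟨fun i => WithLp.toLp 2 fun k => B k i, fun i j hij => ?_⟩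
  rw [EuclideanSpace.dist_eq, Real.sq_sqrt (Finset.sum_nonneg fun _ _ => sq_nonneg _)]
  calc ∑ k, dist (B k i) (B k j) ^ 2
      = ∑ k, (B k i * B k i + B k j * B k j - 2 * (B k i * B k j)) :=
        Finset.sum_congr rfl fun k _ => by rw [Real.dist_eq, sq_abs]; ring
    _ = 2 * C - 2 * w i j := by
        rw [Finset.sum_sub_distrib, Finset.sum_add_distrib, ← Finset.mul_sum, hgram, hgram, hgram]
        simp only [if_true, hij, if_false, hdiag]
        ring

open Classical in
/-- The number of indices at which `i` and `j` are adjacent in the family `G`. -/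
noncomputable def level {n m : ℕ} (G : Fin m → SimpleGraph (Fin n)) (i j : Fin n) : ℕ :=
  (Finset.univ.filter fun t => (G t).Adj i j).card

lemma level_comm {n m : ℕ} (G : Fin m → SimpleGraph (Fin n)) (i j : Fin n) :
    level G i j = level G j i := by
  classical
  unfold level
  exact congrArg Finset.card (Finset.filter_congr fun t _ => (G t).adj_comm i j)

lemma level_le {n m : ℕ} (G : Fin m → SimpleGraph (Fin n)) (i j : Fin n) : level G i j ≤ m := by
  classical
  exact (Finset.card_le_univ _).trans_eq (Fintype.card_fin m)

/-- In a nested family the indices of adjacency form an upper set, so their number determines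
them. -/
lemma le_level_iff {n m : ℕ} {G : Fin m → SimpleGraph (Fin n)} (hG : Monotone G)
    (t : Fin m) (i j : Fin n) : m - (t : ℕ) ≤ level G i j ↔ (G t).Adj i j := by
  classical
  constructor
  · intro h
    by_contra hadj
    have hsub : (Finset.univ.filter fun s => (G s).Adj i j) ⊆ Finset.Ioi t := fun s hs => by
      rw [Finset.mem_Ioi]
      by_contra! hst
      exact hadj (hG hst (Finset.mem_filter.mp hs).2)
    have hcard := Finset.card_le_card hsub
    rw [Fin.card_Ioi] at hcard
    unfold level at h
    have := t.isLt
    have h' : m - (t : ℕ) ≤ m - 1 - t := le_trans (by convert h) hcard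
    omega
  · intro hadj
    have hsub : Finset.Ici t ⊆ (Finset.univ.filter fun s => (G s).Adj i j) := fun s hs =>
      Finset.mem_filter.mpr ⟨Finset.mem_univ _, hG (Finset.mem_Ici.mp hs) hadj⟩
    have hcard := Finset.card_le_card hsub
    rw [Fin.card_Ici] at hcard
    unfold level
    convert hcard

/-- Realization of a filtered graph as nested distance-threshold graphs
(Proposition 5.2): given a nested family `G 1 ≤ ⋯ ≤ G m` of simple graphs on
`Fin n`, there are points `p` in Euclidean space and radii
`0 < r 1 < ⋯ < r m` such that `p` is injective and at every filtration level
`t` the distance-threshold graph of `p` at scale `r t` is exactly `G t`. -/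
theorem filtered_graph_realization (n m : ℕ) (hn : 1 ≤ n) (hm : 1 ≤ m)
    (G : Fin m → SimpleGraph (Fin n)) (hG : Monotone G) :
    ∃ (p : Fin n → EuclideanSpace ℝ (Fin n)) (r : Fin m → ℝ),
      Function.Injective p ∧ (∀ t, 0 < r t) ∧ StrictMono r ∧
      ∀ (t : Fin m) (i j : Fin n), i ≠ j →
        (dist (p i) (p j) ≤ r t ↔ (G t).Adj i j) := by
  have hlevel : ∀ i j, (level G i j : ℝ) ≤ m := fun i j => by exact_mod_cast level_le G i j
  -- The summand `1` makes all squared radii and squared distances positive.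
  set C : ℝ := n * m + 1 with hCdef
  have hmC : (m : ℝ) < C := by
    have h1 : (1 : ℝ) ≤ n := by exact_mod_cast hn
    have h0 : (0 : ℝ) ≤ m := m.cast_nonneg
    nlinarith
  obtain ⟨p, hp⟩ := exists_dist_sq_of_small_off_diag (fun i j => (level G i j : ℝ)) m C
    (fun i j => by rw [level_comm]) (fun i => by simp [level])
    (fun i j => by rw [abs_of_nonneg (Nat.cast_nonneg _)]; exact hlevel i j) (by linarith)
  have hpos : ∀ t : Fin m, 0 < 2 * C - 2 * ((m : ℝ) - (t : ℕ)) := fun t => by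
    have : (0 : ℝ) ≤ (t : ℕ) := Nat.cast_nonneg _
    linarith
  refine ⟨p, fun t => √(2 * C - 2 * ((m : ℝ) - (t : ℕ))), ?_, fun t => Real.sqrt_pos.mpr (hpos t),
    ?_, ?_⟩
  · intro i j hij
    by_contra hne
    have h := hp i j hne
    rw [hij, dist_self] at h
    have := hlevel i j
    norm_num at h
    linarith
  · intro s t hst
    have : ((s : ℕ) : ℝ) < (t : ℕ) := by exact_mod_cast hst
    exact Real.sqrt_lt_sqrt (hpos s).le (by linarith)
  · intro t i j hij
    rw [← le_level_iff hG t i j, Real.le_sqrt dist_nonneg (hpos t).le, hp i j hij,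
      ← Nat.cast_le (α := ℝ), Nat.cast_sub t.isLt.le]
    constructor <;> intro h <;> linarith
end

section
/- Let n ≥ 1 and m ≥ 1, and let G₁ ≤ G₂ ≤ ⋯ ≤ Gₘ be a nested family of simple graphs on the vertex set Fin n. Then there exist points p : Fin n → EuclideanSpace ℝ (Fin n) and real numbers 0 < r₁ < r₂ < ⋯ < rₘ such that p is injective and, for every t ∈ {1,…,m} and every finite set s of vertices, one has (∀ i j ∈ s, i ≠ j → dist (p i) (p j) ≤ r_t) if and only if s is a clique of G_t. Consequently, for each t the Vietoris–Rips complex of the point set {p i} at scale r_t is isomorphic to the clique complex of G_t. (Clique-level form of Proposition 5.2.) -/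
/-!
For a pair `i, j` let `w i j` be the number of levels `t` at which `i` and `j` are adjacent. Since
the family is nested, `i` and `j` are adjacent in `G t` iff `m - t ≤ w i j` (with `t` counted from
`0`). The matrix with constant diagonal `D = n * m + 1` and off-diagonal entries `w i j` is
diagonally dominant, hence positive semidefinite, hence the Gram matrix of `n` points of `ℝⁿ`.
Their squared distances are `2 * D - 2 * w i j`, so that the radii
`r t = √(2 * D - 2 * (m - t))` cut out exactly the graphs `G t`; the clique statement follows
pair by pair.
-/

/-- A symmetric matrix `D • 1 + w` with `0 ≤ w ≤ M` entrywise and `n * M ≤ D` is positive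
semidefinite: its quadratic form is at least `∑ i j, w i j * (x i + x j) ^ 2 / 2`. -/
lemma posSemidef_smul_one_add {n : ℕ} (w : Fin n → Fin n → ℝ) (M D : ℝ)
    (hsymm : ∀ i j, w i j = w j i) (h0 : ∀ i j, 0 ≤ w i j) (hM : ∀ i j, w i j ≤ M)
    (hD : n * M ≤ D) :
    (D • (1 : Matrix (Fin n) (Fin n) ℝ) + Matrix.of w).PosSemidef := by
  refine Matrix.PosSemidef.of_dotProduct_mulVec_nonneg ?_ fun x => ?_
  · ext i j
    simp [Matrix.one_apply, hsymm i j, eq_comm]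
  have hform : star x ⬝ᵥ (D • (1 : Matrix (Fin n) (Fin n) ℝ) + Matrix.of w).mulVec x
      = D * ∑ i, x i ^ 2 + ∑ i, ∑ j, w i j * (x i * x j) := by
    rw [Matrix.add_mulVec, Matrix.smul_mulVec, Matrix.one_mulVec, dotProduct_add]
    simp only [dotProduct, Matrix.mulVec, Matrix.of_apply, Finset.mul_sum, Pi.smul_apply,
      smul_eq_mul, star_trivial]
    congr 1
    · exact Finset.sum_congr rfl fun i _ => by ring
    · exact Finset.sum_congr rfl fun i _ => Finset.sum_congr rfl fun j _ => by ring
  have hterm : ∑ i, ∑ j, -(M / 2 * (x i ^ 2 + x j ^ 2)) ≤ ∑ i, ∑ j, w i j * (x i * x j) := by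
    refine Finset.sum_le_sum fun i _ => Finset.sum_le_sum fun j _ => ?_
    nlinarith [mul_nonneg (h0 i j) (sq_nonneg (x i + x j)),
      mul_nonneg (sub_nonneg.2 (hM i j)) (add_nonneg (sq_nonneg (x i)) (sq_nonneg (x j)))]
  have hsum : ∑ i, ∑ j, -(M / 2 * (x i ^ 2 + x j ^ 2)) = -(n * M * ∑ i, x i ^ 2) := by
    simp only [Finset.sum_neg_distrib, ← Finset.mul_sum, Finset.sum_add_distrib,
      Finset.sum_const, Finset.card_univ, Fintype.card_fin, nsmul_eq_mul]
    ring
  have hsq : 0 ≤ ∑ i, x i ^ 2 := Finset.sum_nonneg fun i _ => sq_nonneg _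
  rw [hform]
  nlinarith [mul_le_mul_of_nonneg_right hD hsq]

open scoped MatrixOrder Matrix.Norms.L2Operator in
/-- The matrix `D • 1 + w` is realized as a Gram matrix, which prescribes the squared distances. -/
lemma exists_dist_sq_eq {n : ℕ} (w : Fin n → Fin n → ℝ) (M D : ℝ)
    (hsymm : ∀ i j, w i j = w j i) (h0 : ∀ i j, 0 ≤ w i j) (hM : ∀ i j, w i j ≤ M)
    (hdiag : ∀ i, w i i = 0) (hD : n * M ≤ D) :
    ∃ p : Fin n → EuclideanSpace ℝ (Fin n),
      ∀ i j, i ≠ j → dist (p i) (p j) ^ 2 = 2 * D - 2 * w i j := by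
  obtain ⟨C, hC⟩ := CStarAlgebra.nonneg_iff_eq_star_mul_self.mp
    (posSemidef_smul_one_add w M D hsymm h0 hM hD).nonneg
  have hgram : ∀ i j, ∑ k, C k i * C k j = (if i = j then D else 0) + w i j := by
    intro i j
    have := congrFun (congrFun hC i) j
    simpa [Matrix.mul_apply, Matrix.star_apply, Matrix.one_apply] using this.symm
  refine ⟨fun i => WithLp.toLp 2 fun k => C k i, fun i j hij => ?_⟩
  have hexp : dist (WithLp.toLp 2 fun k => C k i : EuclideanSpace ℝ (Fin n))
      (WithLp.toLp 2 fun k => C k j) ^ 2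
      = ∑ k, C k i * C k i + ∑ k, C k j * C k j - 2 * ∑ k, C k i * C k j := by
    rw [EuclideanSpace.dist_sq_eq, Finset.mul_sum, ← Finset.sum_add_distrib,
      ← Finset.sum_sub_distrib]
    refine Finset.sum_congr rfl fun k _ => ?_
    simp only [Real.dist_eq, sq_abs]
    ring
  rw [hexp, hgram, hgram, hgram, hdiag, hdiag, if_pos rfl, if_pos rfl, if_neg hij]
  ring

open Classical in
/-- An upward closed set of levels contains `t` iff it has at least `m - t` elements. -/
lemma sub_le_card_filter_iff {m : ℕ} (P : Fin m → Prop) (hP : ∀ s t, s ≤ t → P s → P t)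
    (t : Fin m) : m - (t : ℕ) ≤ (Finset.univ.filter P).card ↔ P t := by
  constructor
  · intro h
    by_contra ht
    have hsub : Finset.univ.filter P ⊆ Finset.Ioi t := fun s hs =>
      Finset.mem_Ioi.2 (lt_of_not_ge fun hst => ht (hP s t hst (Finset.mem_filter.1 hs).2))
    have := Finset.card_le_card hsub
    rw [Fin.card_Ioi] at this
    have := t.isLt
    omega
  · intro h
    have hsub : Finset.Ici t ⊆ Finset.univ.filter P := fun s hs =>
      Finset.mem_filter.2 ⟨Finset.mem_univ _, hP t s (Finset.mem_Ici.1 hs) h⟩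
    simpa using Finset.card_le_card hsub


/-- Clique-level form of Proposition 5.2: given a nested family
`G 1 ≤ ⋯ ≤ G m` of simple graphs on `Fin n`, there are points `p` in Euclidean
space and radii `0 < r 1 < ⋯ < r m` such that `p` is injective and, for every
filtration level `t` and every finite set `s` of vertices, all pairwise
distances of `p` on `s` are at most `r t` if and only if `s` is a clique of
`G t`.  This expresses that the Vietoris–Rips complex of the point set at scale
`r t` is isomorphic to the clique complex of `G t`. -/
theorem filtered_graph_realization_cliques (n m : ℕ) (hn : 1 ≤ n) (hm : 1 ≤ m)
    (G : Fin m → SimpleGraph (Fin n)) (hG : Monotone G) :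
    ∃ (p : Fin n → EuclideanSpace ℝ (Fin n)) (r : Fin m → ℝ),
      Function.Injective p ∧ (∀ t, 0 < r t) ∧ StrictMono r ∧
      ∀ (t : Fin m) (s : Finset (Fin n)),
        (∀ i ∈ s, ∀ j ∈ s, i ≠ j → dist (p i) (p j) ≤ r t) ↔
          (G t).IsClique (s : Set (Fin n)) := by
  classical
  let c : Fin n → Fin n → ℕ := fun i j => (Finset.univ.filter fun t => (G t).Adj i j).card
  have hcm : ∀ i j, c i j ≤ m := fun i j => (Finset.card_le_univ _).trans (by simp)
  have hcm' : ∀ i j, (c i j : ℝ) ≤ m := fun i j => by exact_mod_cast hcm i j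
  have hadj : ∀ (t : Fin m) i j, m - (t : ℕ) ≤ c i j ↔ (G t).Adj i j := fun t i j => by
    have := sub_le_card_filter_iff (fun t => (G t).Adj i j) (fun s t hst h => hG hst h) t
    convert this
  -- The summand `1` makes `D` exceed every `c i j`, so that distinct points are apart.
  let D : ℝ := n * m + 1
  have hD : (m : ℝ) < D := by
    have h1 : (1 : ℝ) ≤ n := by exact_mod_cast hn
    have h2 : (0 : ℝ) ≤ m := Nat.cast_nonneg m
    simp only [D]
    nlinarith
  obtain ⟨p, hp⟩ := exists_dist_sq_eq (fun i j => (c i j : ℝ)) m D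
    (fun i j => by simp [c, SimpleGraph.adj_comm]) (fun i j => Nat.cast_nonneg _) hcm'
    (fun i => by simp [c]) (by simp [D])
  have hrad : ∀ t : Fin m, 0 < 2 * D - 2 * (m - (t : ℕ) : ℝ) := fun t => by
    have : (0 : ℝ) ≤ (t : ℕ) := Nat.cast_nonneg _
    linarith
  have hdist : ∀ (t : Fin m) i j, i ≠ j →
      (dist (p i) (p j) ≤ √(2 * D - 2 * (m - (t : ℕ) : ℝ)) ↔ (G t).Adj i j) := by
    intro t i j hij
    rw [Real.le_sqrt dist_nonneg (hrad t).le, hp i j hij, ← hadj t i j, Nat.sub_le_iff_le_add,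
      ← Nat.cast_le (α := ℝ), Nat.cast_add]
    constructor <;> intro h <;> linarith
  refine ⟨p, fun t => √(2 * D - 2 * (m - (t : ℕ) : ℝ)), ?_, fun t => Real.sqrt_pos.2 (hrad t),
    ?_, ?_⟩
  · intro i j h
    by_contra hij
    have h1 := hp i j hij
    rw [h, dist_self] at h1
    have := hcm' i j
    norm_num at h1
    linarith
  · intro s t hst
    refine Real.sqrt_lt_sqrt (hrad s).le ?_
    have : ((s : ℕ) : ℝ) < (t : ℕ) := by exact_mod_cast hst
    linarith
  · intro t s
    constructor
    · intro h i hi j hj hij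
      exact (hdist t i j hij).1 (h i hi j hj hij)
    · intro h i hi j hj hij
      exact (hdist t i j hij).2 (h hi hj hij)
end
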